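/- Let n be a positive integer. Then 2·δ(n) ≤ n + 4 if and only if n is not an odd prime number. Moreover, 2·δ(n) = n + 4 if and only if n ∈ {2, 4, 6, 8, 10, 14} or n = 2p for some prime p ≥ 11. -/

import Mathlib

/-- `staircaseDelta n` is the minimum of `r + s` over all pairs of positive
integers `(r, s)` with `r ≤ s` and `r * s = n`. -/
noncomputable def staircaseDelta (n : ℕ) : ℕ :=
  sInf {w : ℕ | ∃ r s : ℕ, 0 < r ∧ r ≤ s ∧ r * s = n ∧ w = r + s}

/-!
For `n = r * s` we have `n + 4 - 2 * (r + s) = (r - 2) * (s - 2)`. Hence `2 * δ(n) ≤ n + 4` as soon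
as `n` has a factorization with both factors at least `2`, while `δ(p) = p + 1` for `p` prime.
Equality holds exactly when `2` is a factor in an optimal factorization, i.e. when `n = 2 * m` and
`δ(2 * m) = 2 + m`. If here `m = a * b` with `a, b ≥ 2`, comparing `(2, m)` with `(2 * a, b)` and
`(a, 2 * b)` forces `a = b = 2`, so `m` is `1`, `4` or a prime; conversely `δ(2 * p) = 2 + p` for
`p` prime.
-/

section Algebra

variable {R : Type*} [CommRing R]

theorem mul_add_four_sub_two_mul_add (x y : R) :
    x * y + 4 - 2 * (x + y) = (x - 2) * (y - 2) := by
  ring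

theorem two_mul_add_eq_mul_add_four_iff [NoZeroDivisors R] {x y : R} :
    2 * (x + y) = x * y + 4 ↔ x = 2 ∨ y = 2 := by
  rw [eq_comm, ← sub_eq_zero, mul_add_four_sub_two_mul_add, mul_eq_zero, sub_eq_zero, sub_eq_zero]

theorem two_mul_add_le_mul_add_four [PartialOrder R] [IsOrderedRing R] {x y : R}
    (hx : 2 ≤ x) (hy : 2 ≤ y) : 2 * (x + y) ≤ x * y + 4 := by
  rw [← sub_nonneg, mul_add_four_sub_two_mul_add]
  exact mul_nonneg (sub_nonneg.2 hx) (sub_nonneg.2 hy)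

end Algebra

theorem exists_two_le_mul_eq_of_not_prime {n : ℕ} (hn : 2 ≤ n) (hp : ¬ n.Prime) :
    ∃ a b : ℕ, 2 ≤ a ∧ 2 ≤ b ∧ a * b = n := by
  obtain ⟨a, ⟨b, rfl⟩, ha, hlt⟩ := Nat.exists_dvd_of_not_prime2 hn hp
  exact ⟨a, b, ha, (lt_mul_iff_one_lt_right (by lia)).1 hlt, rfl⟩

theorem add_le_add_of_mul_eq_mul_prime {p q r s : ℕ} (hp : p.Prime) (hq : q.Prime)
    (h : r * s = p * q) : p + q ≤ r + s := by
  wlog hr : p ∣ r generalizing r s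
  · have hs : p ∣ s := (hp.dvd_mul.1 ⟨q, h⟩).resolve_left hr
    exact add_comm s r ▸ this (mul_comm s r ▸ h) hs
  obtain ⟨k, rfl⟩ := hr
  have hks : k * s = q := Nat.eq_of_mul_eq_mul_left hp.pos (by rw [← mul_assoc, h])
  rcases Nat.prime_mul_iff.1 (hks ▸ hq) with ⟨-, rfl⟩ | ⟨-, rfl⟩
  · have := Nat.add_le_mul hp.two_le hq.two_le
    lia
  · lia

theorem exists_mul_eq_and_staircaseDelta_eq {n : ℕ} (hn : 0 < n) :
    ∃ r s : ℕ, r * s = n ∧ staircaseDelta n = r + s := by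
  obtain ⟨r, s, -, -, hrs, hδ⟩ :=
    Nat.sInf_mem (s := {w : ℕ | ∃ r s : ℕ, 0 < r ∧ r ≤ s ∧ r * s = n ∧ w = r + s})
      ⟨1 + n, 1, n, one_pos, hn, one_mul n, rfl⟩
  exact ⟨r, s, hrs, hδ⟩

theorem staircaseDelta_mul_le {r s : ℕ} (hr : 0 < r) (hs : 0 < s) :
    staircaseDelta (r * s) ≤ r + s := by
  rcases le_total r s with hrs | hsr
  · exact Nat.sInf_le ⟨r, s, hr, hrs, rfl, rfl⟩
  · exact Nat.sInf_le ⟨s, r, hs, hsr, mul_comm s r, add_comm r s⟩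

theorem four_mul_le_staircaseDelta_sq {n : ℕ} (hn : 0 < n) : 4 * n ≤ staircaseDelta n ^ 2 := by
  obtain ⟨r, s, rfl, hδ⟩ := exists_mul_eq_and_staircaseDelta_eq hn
  rw [hδ, ← mul_assoc]
  exact four_mul_le_sq_add r s

theorem staircaseDelta_prime {p : ℕ} (hp : p.Prime) : staircaseDelta p = p + 1 := by
  obtain ⟨r, s, rfl, hδ⟩ := exists_mul_eq_and_staircaseDelta_eq hp.pos
  rcases Nat.prime_mul_iff.1 hp with ⟨-, rfl⟩ | ⟨-, rfl⟩ <;> lia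

theorem staircaseDelta_mul_prime {p q : ℕ} (hp : p.Prime) (hq : q.Prime) :
    staircaseDelta (p * q) = p + q := by
  refine (staircaseDelta_mul_le hp.pos hq.pos).antisymm ?_
  obtain ⟨r, s, hrs, hδ⟩ := exists_mul_eq_and_staircaseDelta_eq (mul_pos hp.pos hq.pos)
  exact hδ ▸ add_le_add_of_mul_eq_mul_prime hp hq hrs

theorem staircaseDelta_eight : staircaseDelta 8 = 6 := by
  have upper : staircaseDelta (2 * 4) ≤ 2 + 4 := staircaseDelta_mul_le two_pos four_pos
  have lower : 4 * 8 ≤ staircaseDelta 8 ^ 2 := four_mul_le_staircaseDelta_sq (by decide)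
  exact upper.antisymm (by nlinarith)

theorem two_mul_staircaseDelta_le_of_not_prime {n : ℕ} (hn : 0 < n) (hp : ¬ n.Prime) :
    2 * staircaseDelta n ≤ n + 4 := by
  rcases (Nat.succ_le_of_lt hn).eq_or_lt with rfl | hn2
  · have : staircaseDelta (1 * 1) ≤ 1 + 1 := staircaseDelta_mul_le one_pos one_pos
    lia
  · obtain ⟨a, b, ha, hb, rfl⟩ := exists_two_le_mul_eq_of_not_prime hn2 hp
    calc 2 * staircaseDelta (a * b) ≤ 2 * (a + b) := by
          gcongr
          exact staircaseDelta_mul_le (by lia) (by lia)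
      _ ≤ a * b + 4 := by
          exact_mod_cast two_mul_add_le_mul_add_four (x := (a : ℤ)) (y := b)
            (mod_cast ha) (mod_cast hb)

theorem two_mul_staircaseDelta_le_iff {n : ℕ} (hn : 0 < n) :
    2 * staircaseDelta n ≤ n + 4 ↔ ¬(n.Prime ∧ Odd n) := by
  by_cases hp : n.Prime
  · have := hp.two_le
    rw [staircaseDelta_prime hp, and_iff_right hp, hp.odd_iff]
    lia
  · exact iff_of_true (two_mul_staircaseDelta_le_of_not_prime hn hp) (hp ·.1)

theorem two_mul_staircaseDelta_eq_iff_exists {n : ℕ} (hn : 0 < n) :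
    2 * staircaseDelta n = n + 4 ↔ ∃ m, n = 2 * m ∧ staircaseDelta (2 * m) = 2 + m := by
  constructor
  · intro h
    obtain ⟨r, s, rfl, hδ⟩ := exists_mul_eq_and_staircaseDelta_eq hn
    have hrs : r = 2 ∨ s = 2 := by
      rw [hδ] at h
      exact_mod_cast (two_mul_add_eq_mul_add_four_iff (x := (r : ℤ)) (y := s)).1 (mod_cast h)
    rcases hrs with rfl | rfl
    · exact ⟨s, rfl, hδ⟩
    · exact ⟨r, mul_comm r 2, by rw [mul_comm 2 r, hδ, add_comm]⟩
  · rintro ⟨m, rfl, hδ⟩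
    lia

theorem eq_two_and_eq_two_of_staircaseDelta_two_mul_eq {a b : ℕ} (ha : 2 ≤ a) (hb : 2 ≤ b)
    (h : staircaseDelta (2 * (a * b)) = 2 + a * b) : a = 2 ∧ b = 2 := by
  have hab : 2 + a * b ≤ 2 * a + b := by
    rw [← h, ← mul_assoc]
    exact staircaseDelta_mul_le (by lia) (by lia)
  have hba : 2 + a * b ≤ a + 2 * b := by
    rw [← h, mul_left_comm]
    exact staircaseDelta_mul_le (by lia) (by lia)
  constructor <;> nlinarith

theorem staircaseDelta_two_mul_eq_iff {m : ℕ} (hm : 0 < m) :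
    staircaseDelta (2 * m) = 2 + m ↔ m = 1 ∨ m = 4 ∨ m.Prime := by
  constructor
  · intro h
    by_contra! hne
    obtain ⟨hm1, hm4, hp⟩ := hne
    obtain ⟨a, b, ha, hb, rfl⟩ := exists_two_le_mul_eq_of_not_prime (by lia) hp
    obtain ⟨rfl, rfl⟩ := eq_two_and_eq_two_of_staircaseDelta_two_mul_eq ha hb h
    exact hm4 rfl
  · rintro (rfl | rfl | hp)
    · exact staircaseDelta_prime Nat.prime_two
    · exact staircaseDelta_eight
    · exact staircaseDelta_mul_prime Nat.prime_two hp

theorem two_mul_staircaseDelta_eq_iff {n : ℕ} (hn : 0 < n) :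
    2 * staircaseDelta n = n + 4 ↔ ∃ m, n = 2 * m ∧ (m = 1 ∨ m = 4 ∨ m.Prime) := by
  rw [two_mul_staircaseDelta_eq_iff_exists hn]
  refine exists_congr fun m => and_congr_right fun hnm => ?_
  exact staircaseDelta_two_mul_eq_iff (by lia)

theorem prime_iff_eq_or_eleven_le {p : ℕ} :
    p.Prime ↔ p = 2 ∨ p = 3 ∨ p = 5 ∨ p = 7 ∨ (p.Prime ∧ 11 ≤ p) := by
  rcases lt_or_ge p 11 with hlt | hge
  · interval_cases p <;> norm_num
  · simp only [hge, and_true]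
    lia

/-- For a positive integer `n`, `2·δ(n) ≤ n + 4` iff `n` is not an odd prime;
moreover `2·δ(n) = n + 4` iff `n ∈ {2, 4, 6, 8, 10, 14}` or `n = 2p` for
some prime `p ≥ 11`. -/
theorem stmt8 (n : ℕ) (hn : 0 < n) :
    (2 * staircaseDelta n ≤ n + 4 ↔ ¬(Nat.Prime n ∧ Odd n)) ∧
    (2 * staircaseDelta n = n + 4 ↔
      n ∈ ({2, 4, 6, 8, 10, 14} : Set ℕ) ∨ ∃ p : ℕ, Nat.Prime p ∧ 11 ≤ p ∧ n = 2 * p) := by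
  refine ⟨two_mul_staircaseDelta_le_iff hn, ?_⟩
  rw [two_mul_staircaseDelta_eq_iff hn]
  simp only [Set.mem_insert_iff, Set.mem_singleton_iff]
  constructor
  · rintro ⟨m, rfl, hm⟩
    rw [prime_iff_eq_or_eleven_le] at hm
    by_cases hlarge : m.Prime ∧ 11 ≤ m
    · exact Or.inr ⟨m, hlarge.1, hlarge.2, rfl⟩
    · lia
  · rintro (hsmall | ⟨p, hp, -, rfl⟩)
    · refine ⟨n / 2, by lia, ?_⟩
      rw [prime_iff_eq_or_eleven_le]
      lia
    · exact ⟨p, rfl, Or.inr (Or.inr hp)⟩
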